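/- arXiv:2104.11139 — 7 statements merged into one kernel-verified Lean document; each statement's English description precedes it below -/
import Mathlib

section
/- Let u : ℝ² → ℝ be a smooth function of (x,t) satisfying the mKdV equation u_t + u_xxx − 6u²u_x = 0, and let k = 1 or k = −1. Then the function m := u² + k·u_x satisfies the KdV equation m_t + m_xxx − 6m·m_x = 0. -/
noncomputable section

/-- Partial derivative of `f` with respect to its first argument. -/
def d1 (f : ℝ → ℝ → ℝ) : ℝ → ℝ → ℝ := fun a b => deriv (fun a' => f a' b) a

/-- Partial derivative of `f` with respect to its second argument. -/
def d2 (f : ℝ → ℝ → ℝ) : ℝ → ℝ → ℝ := fun a b => deriv (fun b' => f a b') b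

/-- Smoothness of a two-variable real function. -/
def Smooth2 (f : ℝ → ℝ → ℝ) : Prop := ContDiff ℝ (⊤ : ℕ∞) (fun p : ℝ × ℝ => f p.1 p.2)

theorem aux_fd1 {f : ℝ → ℝ → ℝ} (hf : Smooth2 f) (a b : ℝ) :
    HasDerivAt (fun a' => f a' b)
      (fderiv ℝ (fun p : ℝ × ℝ => f p.1 p.2) (a, b) (1, 0)) a := by
  have h1 : HasFDerivAt (fun p : ℝ × ℝ => f p.1 p.2)
      (fderiv ℝ (fun p : ℝ × ℝ => f p.1 p.2) (a, b)) (a, b) :=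
    (ContDiff.differentiable hf (by simp) (a, b)).hasFDerivAt
  have h2 : HasDerivAt (fun a' : ℝ => (a', b)) ((1 : ℝ), (0 : ℝ)) a :=
    (hasDerivAt_id a).prodMk (hasDerivAt_const a b)
  exact h1.comp_hasDerivAt a h2

theorem aux_fd2 {f : ℝ → ℝ → ℝ} (hf : Smooth2 f) (a b : ℝ) :
    HasDerivAt (fun b' => f a b')
      (fderiv ℝ (fun p : ℝ × ℝ => f p.1 p.2) (a, b) (0, 1)) b := by
  have h1 : HasFDerivAt (fun p : ℝ × ℝ => f p.1 p.2)
      (fderiv ℝ (fun p : ℝ × ℝ => f p.1 p.2) (a, b)) (a, b) :=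
    (ContDiff.differentiable hf (by simp) (a, b)).hasFDerivAt
  have h2 : HasDerivAt (fun b' : ℝ => (a, b')) ((0 : ℝ), (1 : ℝ)) b :=
    (hasDerivAt_const b a).prodMk (hasDerivAt_id b)
  exact h1.comp_hasDerivAt b h2

theorem aux_d1_eq {f : ℝ → ℝ → ℝ} (hf : Smooth2 f) (a b : ℝ) :
    d1 f a b = fderiv ℝ (fun p : ℝ × ℝ => f p.1 p.2) (a, b) (1, 0) := (aux_fd1 hf a b).deriv

theorem aux_d2_eq {f : ℝ → ℝ → ℝ} (hf : Smooth2 f) (a b : ℝ) :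
    d2 f a b = fderiv ℝ (fun p : ℝ × ℝ => f p.1 p.2) (a, b) (0, 1) := (aux_fd2 hf a b).deriv

theorem aux_h1 {f : ℝ → ℝ → ℝ} (hf : Smooth2 f) (a b : ℝ) :
    HasDerivAt (fun a' => f a' b) (d1 f a b) a := by
  rw [aux_d1_eq hf]; exact aux_fd1 hf a b

theorem aux_h2 {f : ℝ → ℝ → ℝ} (hf : Smooth2 f) (a b : ℝ) :
    HasDerivAt (fun b' => f a b') (d2 f a b) b := by
  rw [aux_d2_eq hf]; exact aux_fd2 hf a b

theorem aux_fderiv {f : ℝ → ℝ → ℝ} (hf : Smooth2 f) :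
    ContDiff ℝ (⊤ : ℕ∞) (fderiv ℝ (fun p : ℝ × ℝ => f p.1 p.2)) :=
  ContDiff.fderiv_right hf (by simp)

theorem aux_s1 {f : ℝ → ℝ → ℝ} (hf : Smooth2 f) : Smooth2 (d1 f) := by
  have h : (fun p : ℝ × ℝ => d1 f p.1 p.2)
      = fun p => fderiv ℝ (fun p : ℝ × ℝ => f p.1 p.2) p (1, 0) := by
    funext p; exact aux_d1_eq hf p.1 p.2
  unfold Smooth2
  rw [h]
  exact (aux_fderiv hf).clm_apply contDiff_const

theorem aux_s2 {f : ℝ → ℝ → ℝ} (hf : Smooth2 f) : Smooth2 (d2 f) := by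
  have h : (fun p : ℝ × ℝ => d2 f p.1 p.2)
      = fun p => fderiv ℝ (fun p : ℝ × ℝ => f p.1 p.2) p (0, 1) := by
    funext p; exact aux_d2_eq hf p.1 p.2
  unfold Smooth2
  rw [h]
  exact (aux_fderiv hf).clm_apply contDiff_const

theorem aux_comm {f : ℝ → ℝ → ℝ} (hf : Smooth2 f) (a b : ℝ) :
    d2 (d1 f) a b = d1 (d2 f) a b := by
  have hd := (aux_fderiv hf).differentiable (by simp) (a, b)
  have e1 : (fun p : ℝ × ℝ => d1 f p.1 p.2)
      = fun p => fderiv ℝ (fun p : ℝ × ℝ => f p.1 p.2) p (1, 0) := by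
    funext p; exact aux_d1_eq hf p.1 p.2
  have e2 : (fun p : ℝ × ℝ => d2 f p.1 p.2)
      = fun p => fderiv ℝ (fun p : ℝ × ℝ => f p.1 p.2) p (0, 1) := by
    funext p; exact aux_d2_eq hf p.1 p.2
  rw [aux_d2_eq (aux_s1 hf), aux_d1_eq (aux_s2 hf), e1, e2,
    fderiv_clm_apply hd (differentiableAt_const _), fderiv_clm_apply hd (differentiableAt_const _)]
  have hs : IsSymmSndFDerivAt ℝ (fun p : ℝ × ℝ => f p.1 p.2) (a, b) :=
    (ContDiff.contDiffAt hf).isSymmSndFDerivAt (by simp only [minSmoothness_of_isRCLikeNormedField]; exact WithTop.coe_le_coe.2 le_top)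
  simpa using hs (0, 1) (1, 0)

/-- the Miura transformation `m = u² + k·u_x` maps solutions of mKdV
to solutions of KdV. -/
theorem miura_maps_mKdV_to_KdV (u : ℝ → ℝ → ℝ) (k : ℝ)
    (hu : Smooth2 u) (hk : k = 1 ∨ k = -1)
    (hmKdV : ∀ x t, d2 u x t + d1 (d1 (d1 u)) x t - 6 * (u x t) ^ 2 * d1 u x t = 0) :
    ∀ x t,
      d2 (fun x t => (u x t) ^ 2 + k * d1 u x t) x t
        + d1 (d1 (d1 (fun x t => (u x t) ^ 2 + k * d1 u x t))) x t
        - 6 * ((u x t) ^ 2 + k * d1 u x t)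
          * d1 (fun x t => (u x t) ^ 2 + k * d1 u x t) x t = 0 := by
  have s1 := aux_s1 hu
  have s2 := aux_s1 s1
  have s3 := aux_s1 s2
  have m1 : d1 (fun x t => (u x t) ^ 2 + k * d1 u x t)
      = fun x t => 2 * u x t * d1 u x t + k * d1 (d1 u) x t := by
    funext x t
    refine HasDerivAt.deriv ?_
    refine (((aux_h1 hu x t).pow 2).add ((aux_h1 s1 x t).const_mul k)).congr_deriv ?_
    norm_num
  have m2 : d1 (fun x t => 2 * u x t * d1 u x t + k * d1 (d1 u) x t)
      = fun x t => 2 * (d1 u x t * d1 u x t) + 2 * (u x t * d1 (d1 u) x t)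
        + k * d1 (d1 (d1 u)) x t := by
    funext x t
    refine HasDerivAt.deriv ?_
    refine ((((aux_h1 hu x t).const_mul 2).mul (aux_h1 s1 x t)).add
      ((aux_h1 s2 x t).const_mul k)).congr_deriv ?_
    ring
  have m3 : d1 (fun x t => 2 * (d1 u x t * d1 u x t) + 2 * (u x t * d1 (d1 u) x t)
        + k * d1 (d1 (d1 u)) x t)
      = fun x t => 6 * d1 u x t * d1 (d1 u) x t + 2 * u x t * d1 (d1 (d1 u)) x t
        + k * d1 (d1 (d1 (d1 u))) x t := by
    funext x t
    refine HasDerivAt.deriv ?_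
    refine (((((aux_h1 s1 x t).mul (aux_h1 s1 x t)).const_mul 2).add
      (((aux_h1 hu x t).mul (aux_h1 s2 x t)).const_mul 2)).add
      ((aux_h1 s3 x t).const_mul k)).congr_deriv ?_
    ring
  have e : d2 u = fun x t => 6 * ((u x t) ^ 2 * d1 u x t) - d1 (d1 (d1 u)) x t := by
    funext x t
    linarith [hmKdV x t]
  intro x t
  have mt : d2 (fun x t => (u x t) ^ 2 + k * d1 u x t) x t
      = 2 * u x t * d2 u x t + k * d1 (d2 u) x t := by
    rw [← aux_comm hu]
    refine HasDerivAt.deriv ?_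
    refine (((aux_h2 hu x t).pow 2).add ((aux_h2 s1 x t).const_mul k)).congr_deriv ?_
    norm_num
  have et : d1 (d2 u) x t = 12 * u x t * d1 u x t ^ 2 + 6 * u x t ^ 2 * d1 (d1 u) x t
      - d1 (d1 (d1 (d1 u))) x t := by
    rw [e]
    refine HasDerivAt.deriv ?_
    refine (((((aux_h1 hu x t).pow 2).mul (aux_h1 s1 x t)).const_mul 6).sub
      (aux_h1 s3 x t)).congr_deriv ?_
    simp only [Pi.pow_apply]
    norm_num
    ring
  rw [mt, et, m1, m2, m3, e]
  rcases hk with rfl | rfl <;> ring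
end
end

section
/- Let u : ℝ² → ℝ be a smooth function of (x,t) satisfying the mKdV equation u_t + u_xxx − 6u²u_x = 0, and let Λ ∈ ℝ. Define the 2×2 matrix-valued functions b and c of (x,t) by b = [[−u, Λ],[Λ, u]] and c = [[u_xx − 2u³ + 4Λ²u, 2Λ(u² − u_x − 2Λ²)],[2Λ(u² + u_x − 2Λ²), −u_xx + 2u³ − 4Λ²u]]. Then the zero-curvature condition b_t − c_x + b·c − c·b = 0 holds identically on ℝ². -/
noncomputable section

/-- Entrywise partial derivative of a matrix-valued function w.r.t. the first argument. -/
def dmat1 (A : ℝ → ℝ → Matrix (Fin 2) (Fin 2) ℝ) : ℝ → ℝ → Matrix (Fin 2) (Fin 2) ℝ :=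
  fun a b => Matrix.of fun i j => deriv (fun a' => A a' b i j) a

/-- Entrywise partial derivative of a matrix-valued function w.r.t. the second argument. -/
def dmat2 (A : ℝ → ℝ → Matrix (Fin 2) (Fin 2) ℝ) : ℝ → ℝ → Matrix (Fin 2) (Fin 2) ℝ :=
  fun a b => Matrix.of fun i j => deriv (fun b' => A a b' i j) b

/-- The matrix `b` of the mKdV Lax pair. -/
def bMat (u : ℝ → ℝ → ℝ) (Λ : ℝ) : ℝ → ℝ → Matrix (Fin 2) (Fin 2) ℝ :=
  fun x t => !![-(u x t), Λ; Λ, u x t]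

/-- The matrix `c` of the mKdV Lax pair. -/
def cMat (u : ℝ → ℝ → ℝ) (Λ : ℝ) : ℝ → ℝ → Matrix (Fin 2) (Fin 2) ℝ :=
  fun x t =>
    !![d1 (d1 u) x t - 2 * (u x t) ^ 3 + 4 * Λ ^ 2 * u x t,
        2 * Λ * ((u x t) ^ 2 - d1 u x t - 2 * Λ ^ 2);
      2 * Λ * ((u x t) ^ 2 + d1 u x t - 2 * Λ ^ 2),
        -(d1 (d1 u) x t) + 2 * (u x t) ^ 3 - 4 * Λ ^ 2 * u x t]

/-- if `u` solves mKdV then the zero-curvature condition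
`b_t − c_x + b·c − c·b = 0` holds identically. -/
theorem mKdV_zero_curvature (u : ℝ → ℝ → ℝ) (Λ : ℝ)
    (hu : Smooth2 u)
    (hmKdV : ∀ x t, d2 u x t + d1 (d1 (d1 u)) x t - 6 * (u x t) ^ 2 * d1 u x t = 0) :
    ∀ x t,
      dmat2 (bMat u Λ) x t - dmat1 (cMat u Λ) x t
        + bMat u Λ x t * cMat u Λ x t - cMat u Λ x t * bMat u Λ x t = 0 := by
  intro x t
  have hf : ContDiff ℝ (⊤ : ℕ∞) (fun a => u a t) :=
    ContDiff.comp (g := fun p : ℝ × ℝ => u p.1 p.2) (f := fun a : ℝ => (a, t)) hu (by fun_prop)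
  have hf1 : ContDiff ℝ (⊤ : ℕ∞) (fun a => d1 u a t) := (contDiff_infty_iff_deriv.1 hf).2
  have hf2 : ContDiff ℝ (⊤ : ℕ∞) (fun a => d1 (d1 u) a t) := (contDiff_infty_iff_deriv.1 hf1).2
  have h0 : HasDerivAt (fun a => u a t) (d1 u x t) x :=
    ((contDiff_infty_iff_deriv.1 hf).1 x).hasDerivAt
  have h1 : HasDerivAt (fun a => d1 u a t) (d1 (d1 u) x t) x :=
    ((contDiff_infty_iff_deriv.1 hf1).1 x).hasDerivAt
  have h2 : HasDerivAt (fun a => d1 (d1 u) a t) (d1 (d1 (d1 u)) x t) x :=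
    ((contDiff_infty_iff_deriv.1 hf2).1 x).hasDerivAt
  have e11 := (((h2.fun_sub ((h0.fun_pow 3).const_mul 2)).fun_add (h0.const_mul (4 * Λ ^ 2)))).deriv
  have e22 := (((h2.fun_neg.fun_add ((h0.fun_pow 3).const_mul 2)).fun_sub
    (h0.const_mul (4 * Λ ^ 2)))).deriv
  have e12 := ((((h0.fun_pow 2).fun_sub h1).sub_const (2 * Λ ^ 2)).const_mul (2 * Λ)).deriv
  have e21 := ((((h0.fun_pow 2).fun_add h1).sub_const (2 * Λ ^ 2)).const_mul (2 * Λ)).deriv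
  have et : deriv (fun b => u x b) t = d2 u x t := rfl
  have etn : deriv (fun b => -u x b) t = -d2 u x t := deriv.fun_neg
  have hm := hmKdV x t
  have hb : dmat2 (bMat u Λ) x t = !![-d2 u x t, 0; 0, d2 u x t] := by
    ext i j
    fin_cases i <;> fin_cases j
    · exact etn
    · exact deriv_const t Λ
    · exact deriv_const t Λ
    · exact et
  have hc : dmat1 (cMat u Λ) x t =
      !![d1 (d1 (d1 u)) x t - 2 * (3 * u x t ^ 2 * d1 u x t) + 4 * Λ ^ 2 * d1 u x t,
          2 * Λ * (2 * u x t * d1 u x t - d1 (d1 u) x t);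
        2 * Λ * (2 * u x t * d1 u x t + d1 (d1 u) x t),
          -d1 (d1 (d1 u)) x t + 2 * (3 * u x t ^ 2 * d1 u x t) - 4 * Λ ^ 2 * d1 u x t] := by
    ext i j
    fin_cases i <;> fin_cases j
    · exact e11.trans (by simp)
    · exact e12.trans (by simp)
    · exact e21.trans (by simp)
    · exact e22.trans (by simp)
  rw [hb, hc]
  ext i j
  fin_cases i <;> fin_cases j <;> simp [bMat, cMat]
  · linear_combination -hm
  · ring
  · ring
  · linear_combination hm
end
end

section
/- Let u, ψ₁, ψ₂ : ℝ² → ℝ be smooth functions of (x,t) and Λ ∈ ℝ, and suppose (ψ₁,ψ₂)ᵀ satisfies the mKdV Lax pair: (ψ₁)_x = −u·ψ₁ + Λ·ψ₂, (ψ₂)_x = Λ·ψ₁ + u·ψ₂, (ψ₁)_t = (u_xx − 2u³ + 4Λ²u)ψ₁ + 2Λ(u² − u_x − 2Λ²)ψ₂, (ψ₂)_t = 2Λ(u² + u_x − 2Λ²)ψ₁ − (u_xx − 2u³ + 4Λ²u)ψ₂. Set λ = −Λ², m₁ = u² − u_x and m₂ = u² + u_x. Then for i = 1, 2 the component ψ_i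 satisfies the scalar KdV Lax pair: (ψ_i)_xx = (m_i − λ)ψ_i and (ψ_i)_t = (2m_i + 4λ)(ψ_i)_x − (m_i)_x·ψ_i. -/
noncomputable section

theorem Smooth2.slice {f : ℝ → ℝ → ℝ} (hf : Smooth2 f) (t : ℝ) :
    ContDiff ℝ (⊤ : ℕ∞) (fun x => f x t) := by
  have h : ContDiff ℝ (⊤ : ℕ∞) (fun x : ℝ => ((x, t) : ℝ × ℝ)) := by fun_prop
  exact ContDiff.comp (g := fun p : ℝ × ℝ => f p.1 p.2) hf h

theorem Smooth2.hasD1 {f : ℝ → ℝ → ℝ} (hf : Smooth2 f) (x t : ℝ) :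
    HasDerivAt (fun x => f x t) (d1 f x t) x :=
  (((hf.slice t).differentiable (by simp)) x).hasDerivAt

theorem Smooth2.hasD11 {f : ℝ → ℝ → ℝ} (hf : Smooth2 f) (x t : ℝ) :
    HasDerivAt (fun x => d1 f x t) (d1 (d1 f) x t) x := by
  have h : ContDiff ℝ (⊤ : ℕ∞) (deriv (fun x => f x t)) :=
    (contDiff_infty_iff_deriv.1 (hf.slice t)).2
  exact ((h.differentiable (by simp)) x).hasDerivAt

/-- each component of the mKdV eigenvector satisfies the scalar KdV Lax
pair with potential `mᵢ = u² ∓ u_x` and spectral parameter `λ = −Λ²`. -/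
theorem mKdV_eigenvector_satisfies_KdV_scalar_LaxPair
    (u ψ₁ ψ₂ : ℝ → ℝ → ℝ) (Λ : ℝ)
    (hu : Smooth2 u) (hψ₁ : Smooth2 ψ₁) (hψ₂ : Smooth2 ψ₂)
    (hx1 : ∀ x t, d1 ψ₁ x t = -(u x t) * ψ₁ x t + Λ * ψ₂ x t)
    (hx2 : ∀ x t, d1 ψ₂ x t = Λ * ψ₁ x t + u x t * ψ₂ x t)
    (ht1 : ∀ x t, d2 ψ₁ x t =
      (d1 (d1 u) x t - 2 * (u x t) ^ 3 + 4 * Λ ^ 2 * u x t) * ψ₁ x t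
        + 2 * Λ * ((u x t) ^ 2 - d1 u x t - 2 * Λ ^ 2) * ψ₂ x t)
    (ht2 : ∀ x t, d2 ψ₂ x t =
      2 * Λ * ((u x t) ^ 2 + d1 u x t - 2 * Λ ^ 2) * ψ₁ x t
        - (d1 (d1 u) x t - 2 * (u x t) ^ 3 + 4 * Λ ^ 2 * u x t) * ψ₂ x t) :
    ∀ x t,
      (d1 (d1 ψ₁) x t =
          (((u x t) ^ 2 - d1 u x t) - (-Λ ^ 2)) * ψ₁ x t
        ∧ d2 ψ₁ x t =
          (2 * ((u x t) ^ 2 - d1 u x t) + 4 * (-Λ ^ 2)) * d1 ψ₁ x t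
            - d1 (fun x t => (u x t) ^ 2 - d1 u x t) x t * ψ₁ x t)
      ∧ (d1 (d1 ψ₂) x t =
          (((u x t) ^ 2 + d1 u x t) - (-Λ ^ 2)) * ψ₂ x t
        ∧ d2 ψ₂ x t =
          (2 * ((u x t) ^ 2 + d1 u x t) + 4 * (-Λ ^ 2)) * d1 ψ₂ x t
            - d1 (fun x t => (u x t) ^ 2 + d1 u x t) x t * ψ₂ x t) := by
  intro x t
  have U := hu.hasD1 x t
  have U2 := hu.hasD11 x t
  have P := hψ₁.hasD1 x t
  have Q := hψ₂.hasD1 x t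
  have e1 : d1 (d1 ψ₁) x t =
      (-(d1 u x t) * ψ₁ x t + -(u x t) * d1 ψ₁ x t) + Λ * d1 ψ₂ x t := by
    have h : d1 ψ₁ = fun x t => -(u x t) * ψ₁ x t + Λ * ψ₂ x t :=
      funext fun x => funext fun t => hx1 x t
    have k := ((U.neg.mul P).add (Q.const_mul Λ)).deriv
    refine Eq.trans ?_ k
    rw [h]
    rfl
  have e2 : d1 (d1 ψ₂) x t =
      Λ * d1 ψ₁ x t + (d1 u x t * ψ₂ x t + u x t * d1 ψ₂ x t) := by
    have h : d1 ψ₂ = fun x t => Λ * ψ₁ x t + u x t * ψ₂ x t :=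
      funext fun x => funext fun t => hx2 x t
    have k := ((P.const_mul Λ).add (U.mul Q)).deriv
    refine Eq.trans ?_ k
    rw [h]
    rfl
  have m1 : d1 (fun x t => (u x t) ^ 2 - d1 u x t) x t =
      2 * u x t * d1 u x t - d1 (d1 u) x t := by
    have k := ((U.pow 2).sub U2).deriv
    refine Eq.trans k ?_
    simp
  have m2 : d1 (fun x t => (u x t) ^ 2 + d1 u x t) x t =
      2 * u x t * d1 u x t + d1 (d1 u) x t := by
    have k := ((U.pow 2).add U2).deriv
    refine Eq.trans k ?_
    simp
  rw [e1, e2, m1, m2, ht1, ht2, hx1, hx2]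
  refine ⟨⟨?_, ?_⟩, ?_, ?_⟩ <;> ring
end
end

section
/- Let M : ℝ² → ℝ be a smooth function of (y,T) with M(y,T) ≠ 0 for all (y,T). Then the identity (1/M)_T = (M·M_yy + M_y² − 3M)_y holds on ℝ² if and only if M satisfies the RKdV equation M_T + (M³(M_yy − 1))_y = 0 on ℝ². -/
noncomputable section

/-- for nowhere-vanishing smooth `M(y,T)`, the compatibility identity
`(1/M)_T = (M·M_yy + M_y² − 3M)_y` holds iff `M` solves RKdV. -/
theorem RKdV_compatibility_iff (M : ℝ → ℝ → ℝ)
    (hM : Smooth2 M) (hne : ∀ y T, M y T ≠ 0) :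
    (∀ y T, d2 (fun y T => 1 / M y T) y T =
        d1 (fun y T => M y T * d1 (d1 M) y T + (d1 M y T) ^ 2 - 3 * M y T) y T)
    ↔ (∀ y T, d2 M y T
        + d1 (fun y T => (M y T) ^ 3 * (d1 (d1 M) y T - 1)) y T = 0) := by
  have hs1 : ∀ T, ContDiff ℝ (⊤ : ℕ∞) (fun y => M y T) := fun T =>
    hM.comp (contDiff_id.prodMk contDiff_const)
  have hs2 : ∀ y, ContDiff ℝ (⊤ : ℕ∞) (fun T => M y T) := fun y =>
    hM.comp (contDiff_const.prodMk contDiff_id)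
  have hs3 : ∀ T, ContDiff ℝ (⊤ : ℕ∞) (fun y => d1 M y T) := fun T =>
    (contDiff_infty_iff_deriv.1 (hs1 T)).2
  have hs4 : ∀ T, ContDiff ℝ (⊤ : ℕ∞) (fun y => d1 (d1 M) y T) := fun T =>
    (contDiff_infty_iff_deriv.1 (hs3 T)).2
  refine forall_congr' fun y => forall_congr' fun T => ?_
  have h1 : HasDerivAt (fun y => M y T) (d1 M y T) y :=
    ((hs1 T).differentiable (by simp) y).hasDerivAt
  have h2 : HasDerivAt (fun T => M y T) (d2 M y T) T :=
    ((hs2 y).differentiable (by simp) T).hasDerivAt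
  have h3 : HasDerivAt (fun y => d1 M y T) (d1 (d1 M) y T) y :=
    ((hs3 T).differentiable (by simp) y).hasDerivAt
  have h4 : HasDerivAt (fun y => d1 (d1 M) y T) (d1 (d1 (d1 M)) y T) y :=
    ((hs4 T).differentiable (by simp) y).hasDerivAt
  have e1 : d2 (fun y T => 1 / M y T) y T = -d2 M y T / M y T ^ 2 := by
    simp only [one_div]
    exact (h2.fun_inv (hne y T)).deriv
  have e2 : d1 (fun y T => M y T * d1 (d1 M) y T + (d1 M y T) ^ 2 - 3 * M y T) y T = _ :=
    (((h1.fun_mul h4).fun_add (h3.fun_pow 2)).fun_sub (h1.const_mul 3)).deriv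
  have e3 : d1 (fun y T => (M y T) ^ 3 * (d1 (d1 M) y T - 1)) y T = _ :=
    ((h1.fun_pow 3).fun_mul (h4.sub_const 1)).deriv
  rw [e1, e2, e3, div_eq_iff (pow_ne_zero 2 (hne y T))]
  push_cast
  constructor <;> intro h <;> linear_combination -h
end
end

section
/- Let U : ℝ² → ℝ be a smooth, nowhere-vanishing function of (z,τ), and let Λ ∈ ℝ with Λ ≠ 0. Define the 2×2 matrix-valued functions B = [[−1, Λ/U],[Λ/U, 1]] and C = [[4ΛU, U·U_zz + U_z² − 2U·U_z − 4Λ²],[U·U_zz + U_z² + 2U·U_z − 4Λ², −4ΛU]]. Then the zero-curvature condition B_τ − (ΛC)_z + B·(ΛC) − (ΛC)·B = 0 holds identically on ℝ² if and only if U satisfies the RmKdV equation U_τ + (U³(U_zz − U))_z = 0 on ℝ². -/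
noncomputable section

/-- The matrix `B` of the RmKdV Lax pair. -/
def BMat (U : ℝ → ℝ → ℝ) (Λ : ℝ) : ℝ → ℝ → Matrix (Fin 2) (Fin 2) ℝ :=
  fun z τ => !![-1, Λ / U z τ; Λ / U z τ, 1]

/-- The matrix `C` of the RmKdV Lax pair. -/
def CMat (U : ℝ → ℝ → ℝ) (Λ : ℝ) : ℝ → ℝ → Matrix (Fin 2) (Fin 2) ℝ :=
  fun z τ =>
    !![4 * Λ * U z τ,
        U z τ * d1 (d1 U) z τ + (d1 U z τ) ^ 2 - 2 * U z τ * d1 U z τ - 4 * Λ ^ 2;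
      U z τ * d1 (d1 U) z τ + (d1 U z τ) ^ 2 + 2 * U z τ * d1 U z τ - 4 * Λ ^ 2,
        -(4 * Λ * U z τ)]

theorem slice1_deriv {f : ℝ → ℝ} (hf : ContDiff ℝ (⊤ : ℕ∞) f) :
    ContDiff ℝ (⊤ : ℕ∞) (deriv f) :=
  (contDiff_infty_iff_deriv.1 hf).2

/-- the zero-curvature condition `B_τ − (ΛC)_z + [B, ΛC] = 0` holds
identically iff `U` solves RmKdV. -/
theorem RmKdV_zero_curvature_iff (U : ℝ → ℝ → ℝ) (Λ : ℝ)
    (hU : Smooth2 U) (hne : ∀ z τ, U z τ ≠ 0) (hΛ : Λ ≠ 0) :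
    (∀ z τ,
      dmat2 (BMat U Λ) z τ - dmat1 (fun z τ => Λ • CMat U Λ z τ) z τ
        + BMat U Λ z τ * (Λ • CMat U Λ z τ)
        - (Λ • CMat U Λ z τ) * BMat U Λ z τ = 0)
    ↔ (∀ z τ, d2 U z τ
        + d1 (fun z τ => (U z τ) ^ 3 * (d1 (d1 U) z τ - U z τ)) z τ = 0) := by
  have key : ∀ z τ, ∃ u p q r t : ℝ, u ≠ 0 ∧
      (dmat2 (BMat U Λ) z τ - dmat1 (fun z τ => Λ • CMat U Λ z τ) z τ
        + BMat U Λ z τ * (Λ • CMat U Λ z τ)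
        - (Λ • CMat U Λ z τ) * BMat U Λ z τ
        = (-(Λ / u ^ 2) * (t + (3 * u ^ 2 * p * (q - u) + u ^ 3 * (r - p)))) •
            !![0, 1; 1, 0]) ∧
      d2 U z τ + d1 (fun z τ => (U z τ) ^ 3 * (d1 (d1 U) z τ - U z τ)) z τ
        = t + (3 * u ^ 2 * p * (q - u) + u ^ 3 * (r - p)) := by
    intro z τ
    have hz : ContDiff ℝ (⊤ : ℕ∞) (fun a => U a τ) :=
      ContDiff.comp (g := fun p : ℝ × ℝ => U p.1 p.2) hU
        (contDiff_id.prodMk contDiff_const)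
    have ht : ContDiff ℝ (⊤ : ℕ∞) (fun b => U z b) :=
      ContDiff.comp (g := fun p : ℝ × ℝ => U p.1 p.2) hU
        (contDiff_const.prodMk contDiff_id)
    have hz1 := slice1_deriv hz
    have hz2 := slice1_deriv hz1
    have h0 : HasDerivAt (fun a => U a τ) (d1 U z τ) z :=
      (hz.differentiable (by simp) z).hasDerivAt
    have h1 : HasDerivAt (fun a => d1 U a τ) (d1 (d1 U) z τ) z :=
      (hz1.differentiable (by simp) z).hasDerivAt
    have h2 : HasDerivAt (fun a => d1 (d1 U) a τ) (d1 (d1 (d1 U)) z τ) z :=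
      (hz2.differentiable (by simp) z).hasDerivAt
    have h3 : HasDerivAt (fun b => U z b) (d2 U z τ) τ :=
      (ht.differentiable (by simp) τ).hasDerivAt
    have hu := hne z τ
    have eB : deriv (fun b => Λ / U z b) τ = -(Λ * d2 U z τ) / U z τ ^ 2 := by
      rw [((hasDerivAt_const τ Λ).fun_div h3 hu).deriv]; ring
    have e11 : deriv (fun a => Λ * (4 * Λ * U a τ)) z = Λ * (4 * Λ * d1 U z τ) :=
      ((h0.const_mul _).const_mul _).deriv
    have e22 : deriv (fun a => Λ * (-(4 * Λ * U a τ))) z = Λ * (-(4 * Λ * d1 U z τ)) :=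
      ((h0.const_mul _).fun_neg.const_mul _).deriv
    have e12 : deriv (fun a => Λ * (U a τ * d1 (d1 U) a τ + (d1 U a τ) ^ 2
        - 2 * U a τ * d1 U a τ - 4 * Λ ^ 2)) z
        = Λ * (U z τ * d1 (d1 (d1 U)) z τ + 3 * d1 U z τ * d1 (d1 U) z τ
          - 2 * d1 U z τ ^ 2 - 2 * U z τ * d1 (d1 U) z τ) := by
      rw [(((((h0.fun_mul h2).fun_add (h1.fun_pow 2)).fun_sub
        ((h0.const_mul 2).fun_mul h1)).sub_const (4 * Λ ^ 2)).const_mul Λ).deriv]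
      push_cast; ring
    have e21 : deriv (fun a => Λ * (U a τ * d1 (d1 U) a τ + (d1 U a τ) ^ 2
        + 2 * U a τ * d1 U a τ - 4 * Λ ^ 2)) z
        = Λ * (U z τ * d1 (d1 (d1 U)) z τ + 3 * d1 U z τ * d1 (d1 U) z τ
          + 2 * d1 U z τ ^ 2 + 2 * U z τ * d1 (d1 U) z τ) := by
      rw [(((((h0.fun_mul h2).fun_add (h1.fun_pow 2)).fun_add
        ((h0.const_mul 2).fun_mul h1)).sub_const (4 * Λ ^ 2)).const_mul Λ).deriv]
      push_cast; ring
    have eR : d1 (fun z τ => (U z τ) ^ 3 * (d1 (d1 U) z τ - U z τ)) z τ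
        = 3 * U z τ ^ 2 * d1 U z τ * (d1 (d1 U) z τ - U z τ)
          + U z τ ^ 3 * (d1 (d1 (d1 U)) z τ - d1 U z τ) := by
      have := ((h0.fun_pow 3).fun_mul (h2.fun_sub h0)).deriv
      refine Eq.trans this ?_
      push_cast; ring
    refine ⟨U z τ, d1 U z τ, d1 (d1 U) z τ, d1 (d1 (d1 U)) z τ, d2 U z τ, hu, ?_, by rw [eR]⟩
    have m2 : dmat2 (BMat U Λ) z τ = !![0, -(Λ * d2 U z τ) / U z τ ^ 2;
        -(Λ * d2 U z τ) / U z τ ^ 2, 0] := by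
      ext i j
      fin_cases i <;> fin_cases j
      · exact deriv_const τ (-1 : ℝ)
      · exact eB
      · exact eB
      · exact deriv_const τ (1 : ℝ)
    have m1 : dmat1 (fun z τ => Λ • CMat U Λ z τ) z τ = !![Λ * (4 * Λ * d1 U z τ),
        Λ * (U z τ * d1 (d1 (d1 U)) z τ + 3 * d1 U z τ * d1 (d1 U) z τ
          - 2 * d1 U z τ ^ 2 - 2 * U z τ * d1 (d1 U) z τ);
        Λ * (U z τ * d1 (d1 (d1 U)) z τ + 3 * d1 U z τ * d1 (d1 U) z τ
          + 2 * d1 U z τ ^ 2 + 2 * U z τ * d1 (d1 U) z τ),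
        Λ * (-(4 * Λ * d1 U z τ))] := by
      ext i j
      fin_cases i <;> fin_cases j
      · exact e11
      · exact e12
      · exact e21
      · exact e22
    rw [m1, m2]
    ext i j
    fin_cases i <;> fin_cases j <;> simp [BMat, CMat] <;> field_simp <;> ring
  constructor
  · intro h z τ
    obtain ⟨u, p, q, r, t, hu, hm, he⟩ := key z τ
    rw [he]
    have h' := h z τ
    rw [hm] at h'
    have h01 := congrFun (congrFun h' 0) 1
    have hc : -(Λ / u ^ 2) ≠ 0 := neg_ne_zero.2 (div_ne_zero hΛ (pow_ne_zero 2 hu))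
    rw [Matrix.smul_apply, smul_eq_mul] at h01
    have h02 : -(Λ / u ^ 2) * (t + (3 * u ^ 2 * p * (q - u) + u ^ 3 * (r - p))) = 0 := by
      simpa only [Matrix.of_apply, Matrix.cons_val_zero, Matrix.cons_val_one, mul_one,
        Matrix.zero_apply] using h01
    exact (mul_eq_zero.1 h02).resolve_left hc
  · intro h z τ
    obtain ⟨u, p, q, r, t, hu, hm, he⟩ := key z τ
    have h' := h z τ
    rw [he] at h'
    rw [hm, h', mul_zero, zero_smul]
end
end

section
/- Let H : ℝ → ℝ be a smooth, nowhere-vanishing function of Z, and for α ∈ ℝ define the 2×2 matrix-valued functions B̂(Z,α) = [[−1, α/H],[α/H, 1]] and Ĉ(Z,α) = [[4αH, H·H'' + (H')² − 2H·H' − 4α²],[H·H'' + (H')² + 2H·H' − 4α², −4αH]], where ' denotes d/dZ. Then the zero-curvature condition ∂_α B̂ − ∂_Z(3Ĉ) + B̂·(3Ĉ) − (3Ĉ)·B̂ = 0 holds for all (Z,α) ∈ ℝ² if and only if H satisfies the reduced ODE (H³(H'' − H))' − H/3 = 0 on ℝ. -/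
noncomputable section

/-- The matrix `B̂` of the reduced RmKdV Lax pair, as a function of `(Z, α)`. -/
def BhatMat (H : ℝ → ℝ) : ℝ → ℝ → Matrix (Fin 2) (Fin 2) ℝ :=
  fun Z α => !![-1, α / H Z; α / H Z, 1]

/-- The matrix `Ĉ` of the reduced RmKdV Lax pair, as a function of `(Z, α)`. -/
def ChatMat (H : ℝ → ℝ) : ℝ → ℝ → Matrix (Fin 2) (Fin 2) ℝ :=
  fun Z α =>
    !![4 * α * H Z,
        H Z * deriv (deriv H) Z + (deriv H Z) ^ 2 - 2 * H Z * deriv H Z - 4 * α ^ 2;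
      H Z * deriv (deriv H) Z + (deriv H Z) ^ 2 + 2 * H Z * deriv H Z - 4 * α ^ 2,
        -(4 * α * H Z)]

/-- the zero-curvature condition `∂_α B̂ − ∂_Z(3Ĉ) + [B̂, 3Ĉ] = 0` of the
reduced Lax pair holds for all `(Z, α)` iff `H` solves the reduced ODE
`(H³(H'' − H))' − H/3 = 0`. -/
theorem reduced_RmKdV_zero_curvature_iff (H : ℝ → ℝ)
    (hH : ContDiff ℝ (⊤ : ℕ∞) H) (hne : ∀ Z, H Z ≠ 0) :
    (∀ Z α,
      dmat2 (BhatMat H) Z α - dmat1 (fun Z α => (3 : ℝ) • ChatMat H Z α) Z α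
        + BhatMat H Z α * ((3 : ℝ) • ChatMat H Z α)
        - ((3 : ℝ) • ChatMat H Z α) * BhatMat H Z α = 0)
    ↔ (∀ Z, deriv (fun Z => (H Z) ^ 3 * (deriv (deriv H) Z - H Z)) Z - H Z / 3 = 0) := by
  have h1 : ContDiff ℝ (⊤ : ℕ∞) (deriv H) := by
    have := hH.iterate_deriv 1
    simpa using this
  have h2 : ContDiff ℝ (⊤ : ℕ∞) (deriv (deriv H)) := by
    have := hH.iterate_deriv 2
    simpa using this
  have d0 : ∀ Z, HasDerivAt H (deriv H Z) Z := fun Z =>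
    (hH.differentiable (by simp) Z).hasDerivAt
  have d1 : ∀ Z, HasDerivAt (deriv H) (deriv (deriv H) Z) Z := fun Z =>
    (h1.differentiable (by simp) Z).hasDerivAt
  have d2 : ∀ Z, HasDerivAt (deriv (deriv H)) (deriv (deriv (deriv H)) Z) Z := fun Z =>
    (h2.differentiable (by simp) Z).hasDerivAt
  have eO : ∀ Z, deriv (fun Z => (H Z) ^ 3 * (deriv (deriv H) Z - H Z)) Z
      = 3 * H Z ^ 2 * deriv H Z * (deriv (deriv H) Z - H Z)
        + H Z ^ 3 * (deriv (deriv (deriv H)) Z - deriv H Z) := fun Z => by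
    refine (HasDerivAt.congr_deriv (((d0 Z).pow 3).mul ((d2 Z).sub (d0 Z))) ?_).deriv
    simp
  have e11 : ∀ Z α, deriv (fun Z => 3 * (4 * α * H Z)) Z = 12 * α * deriv H Z := fun Z α => by
    refine (HasDerivAt.congr_deriv (((d0 Z).const_mul (4 * α)).const_mul 3) ?_).deriv
    ring
  have e22 : ∀ Z α, deriv (fun Z => 3 * (-(4 * α * H Z))) Z = -(12 * α * deriv H Z) := fun Z α => by
    refine (HasDerivAt.congr_deriv (((d0 Z).const_mul (4 * α)).neg.const_mul 3) ?_).deriv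
    ring
  have e12 : ∀ Z α, deriv (fun Z => 3 * (H Z * deriv (deriv H) Z + (deriv H Z) ^ 2
      - 2 * H Z * deriv H Z - 4 * α ^ 2)) Z
      = 3 * (H Z * deriv (deriv (deriv H)) Z + 3 * deriv H Z * deriv (deriv H) Z
        - 2 * (H Z * deriv (deriv H) Z + deriv H Z ^ 2)) := fun Z α => by
    refine (HasDerivAt.congr_deriv ((((((d0 Z).mul (d2 Z)).add ((d1 Z).pow 2)).sub
      (((d0 Z).const_mul 2).mul (d1 Z))).sub_const (4 * α ^ 2)).const_mul 3) ?_).deriv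
    simp
    ring
  have e21 : ∀ Z α, deriv (fun Z => 3 * (H Z * deriv (deriv H) Z + (deriv H Z) ^ 2
      + 2 * H Z * deriv H Z - 4 * α ^ 2)) Z
      = 3 * (H Z * deriv (deriv (deriv H)) Z + 3 * deriv H Z * deriv (deriv H) Z
        + 2 * (H Z * deriv (deriv H) Z + deriv H Z ^ 2)) := fun Z α => by
    refine (HasDerivAt.congr_deriv ((((((d0 Z).mul (d2 Z)).add ((d1 Z).pow 2)).add
      (((d0 Z).const_mul 2).mul (d1 Z))).sub_const (4 * α ^ 2)).const_mul 3) ?_).deriv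
    simp
    ring
  have eb : ∀ Z α : ℝ, deriv (fun b : ℝ => b / H Z) α = 1 / H Z := fun Z α =>
    ((hasDerivAt_id α).div_const (H Z)).deriv
  have key : ∀ Z α, dmat2 (BhatMat H) Z α - dmat1 (fun Z α => (3 : ℝ) • ChatMat H Z α) Z α
        + BhatMat H Z α * ((3 : ℝ) • ChatMat H Z α)
        - ((3 : ℝ) • ChatMat H Z α) * BhatMat H Z α
      = (-(3 / H Z ^ 2) * (deriv (fun Z => (H Z) ^ 3 * (deriv (deriv H) Z - H Z)) Z - H Z / 3))
        • !![0, 1; 1, 0] := fun Z α => by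
    have hz := hne Z
    rw [eO]
    ext i j
    fin_cases i <;> fin_cases j <;>
      simp only [dmat1, dmat2, BhatMat, ChatMat, Matrix.sub_apply, Matrix.add_apply,
        Matrix.mul_apply, Fin.sum_univ_two, Matrix.smul_apply, Matrix.of_apply, smul_eq_mul,
        Fin.zero_eta, Fin.mk_one, Fin.isValue, Matrix.cons_val', Matrix.cons_val_zero,
        Matrix.cons_val_one, Matrix.cons_val_fin_one, e11, e12, e21, e22, eb, deriv_const] <;>
      field_simp <;> ring
  simp only [key]
  constructor
  · intro h Z
    have := congrFun (congrFun (h Z 0) 0) 1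
    have hz := hne Z
    simpa [hz] using this
  · intro h Z α
    rw [h Z]
    simp
end
end

section
/- Let m : ℝ² → ℝ be a smooth, nowhere-vanishing function of (x,t) satisfying the KdV equation m_t + m_xxx − 6m·m_x = 0, let λ ∈ ℝ, and let ψ : ℝ² → ℝ be a smooth function satisfying the scalar KdV Lax pair ψ_xx = (m − λ)ψ and ψ_t = (2m + 4λ)ψ_x − m_x·ψ. Let y : ℝ² → ℝ be smooth with y_x = m and y_t = 3m² − m_xx, let M be a smooth function of (y,T) with M(y(x,t), t) = m(x,t), and let Φ be a smooth function of (y,T) with Φ(y(x,t), t) = ψ(x,t) for all (x,t). Then at every point of the form (y(x,t), t), Φ satisfies the scalar RKdV Lax pair: Φ_yy = −(M_y/M)Φ_y + ((M − λ)/M²)Φ and Φ_T = (M²·M_yy + M·M_y² − M² + 4λM)Φ_y − M·M_y·Φ. -/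
noncomputable section

theorem aux_hasFDerivAt {F : ℝ → ℝ → ℝ} (hF : Smooth2 F) (a b : ℝ) :
    HasFDerivAt (fun p : ℝ × ℝ => F p.1 p.2) (fderiv ℝ (fun p : ℝ × ℝ => F p.1 p.2) (a, b)) (a, b) :=
  ((ContDiff.differentiable hF (by simp)) (a, b)).hasFDerivAt

theorem aux_d1 {F : ℝ → ℝ → ℝ} (hF : Smooth2 F) (a b : ℝ) :
    HasDerivAt (fun a' => F a' b) (fderiv ℝ (fun p : ℝ × ℝ => F p.1 p.2) (a, b) (1, 0)) a :=
  (aux_hasFDerivAt hF a b).comp_hasDerivAt (f := fun a' : ℝ => (a', b)) a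
    ((hasDerivAt_id a).prodMk (hasDerivAt_const a b))

theorem aux_d2 {F : ℝ → ℝ → ℝ} (hF : Smooth2 F) (a b : ℝ) :
    HasDerivAt (fun b' => F a b') (fderiv ℝ (fun p : ℝ × ℝ => F p.1 p.2) (a, b) (0, 1)) b :=
  (aux_hasFDerivAt hF a b).comp_hasDerivAt (f := fun b' : ℝ => (a, b')) b
    ((hasDerivAt_const b a).prodMk (hasDerivAt_id b))

theorem aux_smooth_d1 {F : ℝ → ℝ → ℝ} (hF : Smooth2 F) : Smooth2 (d1 F) := by
  have h : (fun p : ℝ × ℝ => d1 F p.1 p.2)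
      = fun p => fderiv ℝ (fun p : ℝ × ℝ => F p.1 p.2) p (1, 0) := by
    funext p
    exact (aux_d1 hF p.1 p.2).deriv
  unfold Smooth2
  rw [h]
  exact (ContDiff.fderiv_right (m := (⊤ : ℕ∞)) hF (by simp)).clm_apply contDiff_const

theorem aux_has1 {F : ℝ → ℝ → ℝ} (hF : Smooth2 F) (a b : ℝ) :
    HasDerivAt (fun a' => F a' b) (d1 F a b) a :=
  (aux_d1 hF a b).differentiableAt.hasDerivAt

theorem aux_chain1 {F y : ℝ → ℝ → ℝ} (hF : Smooth2 F) (hy : Smooth2 y) (x t : ℝ) :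
    HasDerivAt (fun x' => F (y x' t) t) (d1 F (y x t) t * d1 y x t) x :=
  HasDerivAt.comp (h₂ := fun a' => F a' t) (h := fun x' => y x' t) x
    (aux_has1 hF (y x t) t) (aux_has1 hy x t)

theorem aux_chain2 {F y : ℝ → ℝ → ℝ} (hF : Smooth2 F) (hy : Smooth2 y) (x t : ℝ) :
    HasDerivAt (fun t' => F (y x t') t') (d1 F (y x t) t * d2 y x t + d2 F (y x t) t) t := by
  have h2 : HasDerivAt (fun t' => y x t') (d2 y x t) t :=
    (aux_d2 hy x t).differentiableAt.hasDerivAt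
  have h := (aux_hasFDerivAt hF (y x t) t).comp_hasDerivAt (f := fun t' : ℝ => (y x t', t')) t
    (h2.prodMk (hasDerivAt_id t))
  refine h.congr_deriv ?_
  have e1 : d1 F (y x t) t = _ := (aux_d1 hF (y x t) t).deriv
  have e2 : d2 F (y x t) t = _ := (aux_d2 hF (y x t) t).deriv
  have e : ((d2 y x t, 1) : ℝ × ℝ) = d2 y x t • ((1, 0) : ℝ × ℝ) + (0, 1) := by simp
  rw [e1, e2, e, map_add, map_smul, smul_eq_mul, mul_comm]

/-- the reciprocal transformation of the scalar KdV Lax pair yields the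
scalar RKdV Lax pair at every point `(y(x,t), t)`. -/
theorem reciprocal_KdV_LaxPair_to_RKdV_LaxPair
    (m ψ y M Φ : ℝ → ℝ → ℝ) (lam : ℝ)
    (hm : Smooth2 m) (hψ : Smooth2 ψ) (hy : Smooth2 y)
    (hM : Smooth2 M) (hΦ : Smooth2 Φ)
    (hne : ∀ x t, m x t ≠ 0)
    (hKdV : ∀ x t, d2 m x t + d1 (d1 (d1 m)) x t - 6 * m x t * d1 m x t = 0)
    -- scalar KdV Lax pair :
    (hspec : ∀ x t, d1 (d1 ψ) x t = (m x t - lam) * ψ x t)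
    (htime : ∀ x t, d2 ψ x t = (2 * m x t + 4 * lam) * d1 ψ x t - d1 m x t * ψ x t)
    -- reciprocal transformation :
    (hyx : ∀ x t, d1 y x t = m x t)
    (hyt : ∀ x t, d2 y x t = 3 * (m x t) ^ 2 - d1 (d1 m) x t)
    (hMm : ∀ x t, M (y x t) t = m x t)
    (hΦψ : ∀ x t, Φ (y x t) t = ψ x t) :
    ∀ x t,
      d1 (d1 Φ) (y x t) t =
          -(d1 M (y x t) t / M (y x t) t) * d1 Φ (y x t) t
            + ((M (y x t) t - lam) / (M (y x t) t) ^ 2) * Φ (y x t) t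
      ∧ d2 Φ (y x t) t =
          ((M (y x t) t) ^ 2 * d1 (d1 M) (y x t) t
              + M (y x t) t * (d1 M (y x t) t) ^ 2
              - (M (y x t) t) ^ 2 + 4 * lam * M (y x t) t) * d1 Φ (y x t) t
            - M (y x t) t * d1 M (y x t) t * Φ (y x t) t := by
  have key : ∀ {F f : ℝ → ℝ → ℝ}, Smooth2 F → (∀ x t, F (y x t) t = f x t) →
      ∀ x t, d1 f x t = d1 F (y x t) t * m x t := by
    intro F f hF h x t
    have h1 := (aux_chain1 hF hy x t).deriv
    simp only [h, hyx] at h1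
    exact h1
  have key2 : ∀ {F f : ℝ → ℝ → ℝ}, Smooth2 F → (∀ x t, F (y x t) t = f x t) →
      ∀ x t, d1 (d1 f) x t = d1 (d1 F) (y x t) t * m x t * m x t + d1 F (y x t) t * d1 m x t := by
    intro F f hF h x t
    have e : d1 f = fun x t => d1 F (y x t) t * m x t := by
      funext x t
      exact key hF h x t
    have h1 := ((aux_chain1 (aux_smooth_d1 hF) hy x t).mul (aux_has1 hm x t)).deriv
    rw [e]
    rw [hyx] at h1
    exact h1
  intro x t
  have a1 := key hM hMm x t
  have a2 := key2 hM hMm x t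
  have b1 := key hΦ hΦψ x t
  have b2 := key2 hΦ hΦψ x t
  have c := (aux_chain2 hΦ hy x t).deriv
  simp only [hΦψ] at c
  change d2 ψ x t = _ at c
  rw [htime, hyt, a2, b1, a1] at c
  rw [hspec, a1] at b2
  have hn := hne x t
  rw [hMm, hΦψ]
  constructor
  · field_simp
    linear_combination -b2
  · linear_combination -c
end
end
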